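/- Let W be a symmetric n×n real matrix (W_{ij} = W_{ji}), a ∈ ℝⁿ with a_i ∈ {−1,+1}, η_τ ∈ ℝ, g_l : ℝ → ℝ arbitrary, h_i : ℝ → ℝ differentiable, and τ̄ ∈ ℕ. Let τ_{ij} : ℕ → {0,1,…,τ̄} be delay functions that are symmetric, τ_{ij}(k) = τ_{ji}(k) for all i, j, k. Suppose z : {−τ̄, −τ̄+1, …} → ℝⁿ satisfies, for all k ≥ 0 and all i, the delayed update z_i(k+1) = z_i(k) + η_τ a_i ∑_{j=1}^n W_{ij} ( g_l(a_j h_j'(z_j(k − τ_{ij}(k)))) − g_l(a_i h_i'(z_i(k − τ_{ij}(k)))) ). Then ∑_{i=1}^n a_i z_i(k+1) = ∑_{i=1}^n a_i z_i(k) for every k ≥ 0; in particular, if ∑_i a_i z_i(0) = b then the resource-demand feasibility constraint ∑_i a_i z_i(k) = b holds at all iterations k ≥ 0. -/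

import Mathlib

/-!
Since `a i ^ 2 = 1`, one update changes `∑ i, a i * z i` by `ητ` times the double sum over
`(i, j)` of the flow along the link from `j` to `i`. Both endpoints of a link read states with
the same delay and weight, so this flow is antisymmetric in `(i, j)` and the double sum
vanishes by `sum_sum_eq_zero_of_antisymm`. Feasibility at all times follows by induction.
-/

theorem sum_sum_eq_zero_of_antisymm {n : ℕ} (F : Fin n → Fin n → ℝ)
    (hF : ∀ i j, F i j = -F j i) : ∑ i, ∑ j, F i j = 0 := by
  have hneg : ∑ i, ∑ j, F i j = -∑ i, ∑ j, F i j := by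
    conv_lhs => rw [Finset.sum_comm]
    simp only [← Finset.sum_neg_distrib]
    exact Finset.sum_congr rfl fun i _ => Finset.sum_congr rfl fun j _ => hF j i
  linarith

/-- All-time feasibility of the delayed discrete-time update. With
symmetric `W`, `a i ∈ {−1,+1}`, symmetric bounded delays `τ i j k ≤ τmax`
(`τ i j k = τ j i k`), and states `z` indexed on `ℤ` (so that the values at negative
times `−τmax,…,−1` serve as the initial history), if for all `k ≥ 0`
`z_i(k+1) = z_i(k) + η_τ a_i ∑ j, W i j (g_l(a_j (h j)'(z_j(k − τ_{ij}(k)))) −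
g_l(a_i (h i)'(z_i(k − τ_{ij}(k)))))`, then `∑ i, a i * z i` is conserved at each step;
in particular a feasible initialization `∑ i, a i * z i 0 = b` stays feasible forever. -/
theorem statement17 (n : ℕ) (W : Matrix (Fin n) (Fin n) ℝ)
    (hW : ∀ i j, W i j = W j i)
    (a : Fin n → ℝ) (ha : ∀ i, a i = 1 ∨ a i = -1)
    (ητ : ℝ) (gl : ℝ → ℝ)
    (h : Fin n → ℝ → ℝ) (hdiff : ∀ i, Differentiable ℝ (h i))
    (τmax : ℕ) (τ : Fin n → Fin n → ℕ → ℕ)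
    (hτ_bdd : ∀ i j k, τ i j k ≤ τmax)
    (hτ_symm : ∀ i j k, τ i j k = τ j i k)
    (z : ℤ → Fin n → ℝ)
    (hz : ∀ (k : ℕ) (i : Fin n), z ((k : ℤ) + 1) i = z (k : ℤ) i +
      ητ * a i * ∑ j, W i j *
        (gl (a j * deriv (h j) (z ((k : ℤ) - (τ i j k : ℤ)) j)) -
         gl (a i * deriv (h i) (z ((k : ℤ) - (τ i j k : ℤ)) i)))) :
    (∀ k : ℕ, ∑ i, a i * z ((k : ℤ) + 1) i = ∑ i, a i * z (k : ℤ) i) ∧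
    (∀ b : ℝ, ∑ i, a i * z 0 i = b → ∀ k : ℕ, ∑ i, a i * z (k : ℤ) i = b) := by
  have step : ∀ k : ℕ, ∑ i, a i * z ((k : ℤ) + 1) i = ∑ i, a i * z (k : ℤ) i := by
    intro k
    have hflow := sum_sum_eq_zero_of_antisymm (fun i j => W i j *
        (gl (a j * deriv (h j) (z ((k : ℤ) - (τ i j k : ℤ)) j)) -
         gl (a i * deriv (h i) (z ((k : ℤ) - (τ i j k : ℤ)) i)))) (by
      intro i j
      rw [hW i j, hτ_symm i j k]
      ring)
    have hterm : ∀ i, a i * z ((k : ℤ) + 1) i = a i * z (k : ℤ) i + ητ * ∑ j, W i j *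
        (gl (a j * deriv (h j) (z ((k : ℤ) - (τ i j k : ℤ)) j)) -
         gl (a i * deriv (h i) (z ((k : ℤ) - (τ i j k : ℤ)) i))) := by
      intro i
      have hsq : a i * a i = 1 := by rcases ha i with hi | hi <;> rw [hi] <;> norm_num
      rw [hz k i]
      linear_combination (ητ * ∑ j, W i j *
        (gl (a j * deriv (h j) (z ((k : ℤ) - (τ i j k : ℤ)) j)) -
         gl (a i * deriv (h i) (z ((k : ℤ) - (τ i j k : ℤ)) i)))) * hsq
    rw [Finset.sum_congr rfl fun i _ => hterm i, Finset.sum_add_distrib, ← Finset.mul_sum,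
      hflow, mul_zero, add_zero]
  refine ⟨step, fun b hb k => ?_⟩
  induction k with
  | zero => simpa using hb
  | succ k ih =>
    rw [Nat.cast_succ, step k, ih]
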